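/- arXiv:2202.12942 — 2 statements merged into one kernel-verified Lean document; each statement's English description precedes it below -/
import Mathlib

section
/- Plancherel identity for the QPFT: for every f ∈ L¹(ℝ) ∩ L²(ℝ), ∫_ℝ |Q_μ[f](ξ)|² dξ = ∫_ℝ |f(t)|² dt. -/
open MeasureTheory Complex

/-- The constant √(b/(2πi)) = √(b/(2π))·e^{−iπ/4}. -/
noncomputable def qpConst (b : ℝ) : ℂ :=
  (Real.sqrt (b / (2 * Real.pi)) : ℂ) * Complex.exp (-((Real.pi / 4 : ℝ) : ℂ) * Complex.I)

/-- The dilation ψ_α(t) = α^{−1/2} ψ(t/α). -/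
noncomputable def dil (ψ : ℝ → ℂ) (α : ℝ) (t : ℝ) : ℂ :=
  ((α ^ (-(1 / 2 : ℝ)) : ℝ) : ℂ) * ψ (t / α)

/-- The quadratic-phase Fourier transform. -/
noncomputable def QPFT (a b c d e : ℝ) (f : ℝ → ℂ) (ξ : ℝ) : ℂ :=
  qpConst b * ∫ t : ℝ, f t *
    Complex.exp (Complex.I * ((a * t ^ 2 + b * t * ξ + c * ξ ^ 2 + d * t + e * ξ : ℝ) : ℂ))

/-- The quadratic-phase wave packet transform of `f` with respect to the wavelet `ψ`. -/
noncomputable def QPWPT (a b c d e : ℝ) (ψ f : ℝ → ℂ) (ξ β α : ℝ) : ℂ :=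
  qpConst b * ∫ t : ℝ,
    Complex.exp (Complex.I * ((2 * a * t ^ 2 + b * t * ξ + c * ξ ^ 2 + 2 * d * t + e * ξ
      - a * β ^ 2 - d * β : ℝ) : ℂ)) * f t * (starRingEnd ℂ) (dil ψ α (t - β))

/-- The analyzing packet ψ^μ_{ξ,β,α}. -/
noncomputable def qpwPacket (a b c d e : ℝ) (ψ : ℝ → ℂ) (ξ β α : ℝ) (t : ℝ) : ℂ :=
  (starRingEnd ℂ) (qpConst b) *
    Complex.exp (-Complex.I * ((2 * a * t ^ 2 + b * t * ξ + c * ξ ^ 2 + 2 * d * t + e * ξ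
      - a * β ^ 2 - d * β : ℝ) : ℂ)) * dil ψ α (t - β)

/-!
Up to unimodular factors, `QPFT a b c d e f ξ` is `√(b / 2π)` times the Fourier transform of a
chirp-modulated copy of `f`, evaluated at `-(b / 2π) ξ`. The chirp does not change `|f|` and the
dilation is compensated by the factor `b / 2π`, so the identity reduces to the classical Plancherel
theorem. For the latter, the Fourier integral of a function in `L¹ ∩ L²` agrees almost everywhere
with its isometric `L²` Fourier transform, because both have the same pairing with every test
function.
-/

open FourierTransform SchwartzMap
open scoped ContDiff

theorem integral_norm_sq_eq_lpNorm_sq {α F : Type*} [MeasurableSpace α] [NormedAddCommGroup F]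
    {μ : Measure α} {f : α → F} (hf : AEStronglyMeasurable f μ) :
    ∫ x, ‖f x‖ ^ 2 ∂μ = lpNorm f 2 μ ^ 2 := by
  rw [lpNorm_eq_integral_norm_rpow_toReal two_ne_zero ENNReal.ofNat_ne_top hf,
    ENNReal.toReal_ofNat, ← Real.rpow_ofNat, Real.rpow_inv_rpow (by positivity) two_ne_zero]
  simp only [Real.rpow_ofNat]

theorem memLp_circle_smul {α F : Type*} [MeasurableSpace α] [NormedAddCommGroup F]
    [NormedSpace ℂ F] {μ : Measure α} {p : ENNReal} {u : α → Circle} {f : α → F}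
    (hu : AEStronglyMeasurable u μ) (hf : MemLp f p μ) : MemLp (fun x ↦ u x • f x) p μ :=
  hf.congr_norm (hu.smul hf.1) <| .of_forall fun _ ↦ (Circle.norm_smul _ _).symm

section Plancherel

variable {E F : Type*}
  [NormedAddCommGroup E] [InnerProductSpace ℝ E] [FiniteDimensional ℝ E]
  [MeasurableSpace E] [BorelSpace E]
  [NormedAddCommGroup F]

theorem integral_fourier_smul_eq_integral_smul_fourier [NormedSpace ℂ F] [CompleteSpace F]
    {φ : E → ℂ} {f : E → F} (hφ : Integrable φ) (hf : Integrable f) :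
    ∫ x, 𝓕 φ x • f x = ∫ x, φ x • 𝓕 f x := by
  simpa only [flip_innerₗ] using! VectorFourier.integral_fourierIntegral_smul_eq_flip
    (L := innerₗ E) Real.continuous_fourierChar continuous_inner hφ hf

theorem continuous_fourier_of_integrable [NormedSpace ℂ F] {f : E → F} (hf : Integrable f) :
    Continuous (𝓕 f) :=
  VectorFourier.fourierIntegral_continuous Real.continuous_fourierChar continuous_inner hf

variable [InnerProductSpace ℂ F] [CompleteSpace F]

theorem integral_smul_fourierTransformₗᵢ_toLp {f : E → F} (hf₁ : Integrable f) (hf₂ : MemLp f 2)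
    (φ : 𝓢(E, ℂ)) :
    ∫ x, φ x • Lp.fourierTransformₗᵢ E F (hf₂.toLp f) x = ∫ x, φ x • 𝓕 f x := calc
  ∫ x, φ x • Lp.fourierTransformₗᵢ E F (hf₂.toLp f) x = ∫ x, 𝓕 φ x • (hf₂.toLp f) x := by
    simpa only [TemperedDistribution.fourier_apply, Lp.toTemperedDistribution_apply] using!
      (DFunLike.congr_fun (Lp.fourier_toTemperedDistribution_eq (hf₂.toLp f)) φ).symm
  _ = ∫ x, 𝓕 φ x • f x := by
    refine integral_congr_ae ?_
    filter_upwards [hf₂.coeFn_toLp] with x hx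
    rw [hx]
  _ = ∫ x, φ x • 𝓕 f x := by
    rw [fourier_coe, integral_fourier_smul_eq_integral_smul_fourier φ.integrable hf₁]

theorem fourierTransformₗᵢ_toLp_ae_eq {f : E → F} (hf₁ : Integrable f) (hf₂ : MemLp f 2) :
    Lp.fourierTransformₗᵢ E F (hf₂.toLp f) =ᵐ[volume] 𝓕 f := by
  refine ae_eq_of_integral_contDiff_smul_eq ((Lp.memLp _).locallyIntegrable one_le_two)
    (continuous_fourier_of_integrable hf₁).locallyIntegrable fun φ hφ hφ_supp ↦ ?_
  have hφ_supp' : HasCompactSupport fun x ↦ (φ x : ℂ) := hφ_supp.comp_left ofReal_zero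
  have hφ' : ContDiff ℝ ∞ fun x ↦ (φ x : ℂ) := ofRealCLM.contDiff.comp hφ
  simpa using integral_smul_fourierTransformₗᵢ_toLp hf₁ hf₂ (hφ_supp'.toSchwartzMap hφ')

theorem eLpNorm_fourier_two {f : E → F} (hf₁ : Integrable f) (hf₂ : MemLp f 2) :
    eLpNorm (𝓕 f) 2 volume = eLpNorm f 2 volume := calc
  eLpNorm (𝓕 f) 2 volume = eLpNorm (Lp.fourierTransformₗᵢ E F (hf₂.toLp f)) 2 volume :=
    (eLpNorm_congr_ae (fourierTransformₗᵢ_toLp_ae_eq hf₁ hf₂)).symm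
  _ = ‖Lp.fourierTransformₗᵢ E F (hf₂.toLp f)‖ₑ := (Lp.enorm_def _).symm
  _ = ‖hf₂.toLp f‖ₑ := (Lp.fourierTransformₗᵢ E F).enorm_map _
  _ = eLpNorm f 2 volume := Lp.enorm_toLp hf₂

theorem integral_norm_sq_fourier {f : E → F} (hf₁ : Integrable f) (hf₂ : MemLp f 2) :
    ∫ ξ, ‖𝓕 f ξ‖ ^ 2 = ∫ x, ‖f x‖ ^ 2 := by
  have h𝓕f : AEStronglyMeasurable (𝓕 f) :=
    (continuous_fourier_of_integrable hf₁).aestronglyMeasurable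
  rw [integral_norm_sq_eq_lpNorm_sq h𝓕f, integral_norm_sq_eq_lpNorm_sq hf₂.1,
    ← toReal_eLpNorm h𝓕f, ← toReal_eLpNorm hf₂.1, eLpNorm_fourier_two hf₁ hf₂]

end Plancherel

/-- The chirp `t ↦ exp (i (a t² + d t))` carrying the quadratic phase, as an element of the unit
circle. -/
noncomputable def chirp (a d t : ℝ) : Circle :=
  Circle.exp (a * t ^ 2 + d * t)

theorem continuous_chirp (a d : ℝ) : Continuous (chirp a d) := by
  unfold chirp
  fun_prop

theorem qpft_eq_mul_fourier (a b c d e : ℝ) (f : ℝ → ℂ) (ξ : ℝ) :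
    QPFT a b c d e f ξ =
      qpConst b * (chirp c e ξ * 𝓕 (fun t ↦ chirp a d t • f t) (-(b / (2 * Real.pi)) * ξ)) := by
  rw [QPFT, Real.fourier_real_eq_integral_exp_smul, ← integral_const_mul (chirp c e ξ : ℂ)]
  congr 2
  ext t
  have phase_eq : I * ((a * t ^ 2 + b * t * ξ + c * ξ ^ 2 + d * t + e * ξ : ℝ) : ℂ) =
      ((c * ξ ^ 2 + e * ξ : ℝ) : ℂ) * I +
        (((-2 * Real.pi * t * (-(b / (2 * Real.pi)) * ξ) : ℝ) : ℂ) * I +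
          ((a * t ^ 2 + d * t : ℝ) : ℂ) * I) := by
    have := Real.pi_ne_zero
    rw [← add_mul, ← add_mul, mul_comm I, ← ofReal_add, ← ofReal_add]
    congr 2
    field_simp
    ring
  rw [phase_eq, exp_add, exp_add, chirp, chirp, Circle.smul_def, Circle.coe_exp, Circle.coe_exp,
    smul_eq_mul, smul_eq_mul]
  ring

theorem norm_qpConst (b : ℝ) : ‖qpConst b‖ = √(b / (2 * Real.pi)) := by
  rw [qpConst, norm_mul, ← ofReal_neg, norm_exp_ofReal_mul_I, mul_one, norm_real,
    Real.norm_of_nonneg (Real.sqrt_nonneg _)]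

theorem norm_qpft (a b c d e : ℝ) (f : ℝ → ℂ) (ξ : ℝ) :
    ‖QPFT a b c d e f ξ‖ = √(b / (2 * Real.pi)) *
      ‖𝓕 (fun t ↦ chirp a d t • f t) (-(b / (2 * Real.pi)) * ξ)‖ := by
  rw [qpft_eq_mul_fourier, norm_mul, norm_mul, norm_qpConst, Circle.norm_coe, one_mul]

theorem qpft_plancherel (a b c d e : ℝ) (hb : 0 < b) (f : ℝ → ℂ)
    (hf1 : Integrable f volume) (hf2 : MemLp f 2 volume) :
    ∫ ξ : ℝ, ‖QPFT a b c d e f ξ‖ ^ 2 = ∫ t : ℝ, ‖f t‖ ^ 2 := by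
  set r := b / (2 * Real.pi) with hr
  have hr_pos : 0 < r := by positivity
  set g : ℝ → ℂ := fun t ↦ chirp a d t • f t with hg
  have h_chirp : AEStronglyMeasurable (chirp a d) := (continuous_chirp a d).aestronglyMeasurable
  have hg₁ : Integrable g := memLp_one_iff_integrable.mp
    (memLp_circle_smul h_chirp (memLp_one_iff_integrable.mpr hf1))
  have hg₂ : MemLp g 2 := memLp_circle_smul h_chirp hf2
  calc
    ∫ ξ, ‖QPFT a b c d e f ξ‖ ^ 2 = ∫ ξ, r * ‖𝓕 g (-r * ξ)‖ ^ 2 := by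
      simp only [norm_qpft, ← hr, ← hg, mul_pow, Real.sq_sqrt hr_pos.le]
    _ = r * (r⁻¹ * ∫ η, ‖𝓕 g η‖ ^ 2) := by
      rw [integral_const_mul, Measure.integral_comp_mul_left (fun η ↦ ‖𝓕 g η‖ ^ 2), abs_inv,
        abs_neg, abs_of_pos hr_pos, smul_eq_mul]
    _ = ∫ η, ‖𝓕 g η‖ ^ 2 := mul_inv_cancel_left₀ hr_pos.ne' _
    _ = ∫ t, ‖g t‖ ^ 2 := integral_norm_sq_fourier hg₁ hg₂
    _ = ∫ t, ‖f t‖ ^ 2 := by simp only [hg, Circle.norm_smul]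
end

section
/- Let f, g ∈ L¹(ℝ) ∩ L²(ℝ), let ψ ∈ L¹(ℝ) ∩ L²(ℝ), and fix α > 0. Then ∫_ℝ ∫_ℝ W^μ_f(ξ, β, α) · conj(W^μ_g(ξ, β, α)) dξ dβ = ‖ψ‖²_{L²(ℝ)} · ⟨f, g⟩_{L²(ℝ)}, where both transforms are taken with respect to the same wavelet ψ and ⟨f, g⟩_{L²(ℝ)} = ∫_ℝ f(t) conj(g(t)) dt. -/
open MeasureTheory Complex

/-!
For each translation `β`, the transform `ξ ↦ W_f(ξ, β, α)` is, up to a constant, a unimodular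
factor and the dilation by `-b / 2π`, the Fourier transform of `t ↦ f(t) conj(ψ_α(t - β))`
multiplied by a chirp. Chirp and unimodular factor cancel in the product of two transforms, so
Parseval turns the `ξ`-integral into `∫ f(t) conj(g(t)) |ψ_α(t - β)|² dt` (with `ψ_α conj(φ_α)` in
place of `|ψ_α|²` when `f` is analysed with another wavelet `φ`), and Fubini together with the
translation invariance of the integral separates the two factors. For `f, ψ ∈ L²` the windowed
signal is only known to be in `L²` for almost every `β`, which is enough.
-/

open scoped ContDiff ENNReal FourierTransform SchwartzMap InnerProductSpace

section Plancherel

variable {V F : Type*} [NormedAddCommGroup V] [InnerProductSpace ℝ V] [FiniteDimensional ℝ V]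
  [MeasurableSpace V] [BorelSpace V] [NormedAddCommGroup F] [CompleteSpace F]

theorem ae_eq_of_forall_integral_schwartzMap_smul_eq [NormedSpace ℂ F] {μ : Measure V}
    {u v : V → F} (hu : LocallyIntegrable u μ) (hv : LocallyIntegrable v μ)
    (h : ∀ G : 𝓢(V, ℂ), ∫ x, G x • u x ∂μ = ∫ x, G x • v x ∂μ) : u =ᵐ[μ] v := by
  refine ae_eq_of_integral_contDiff_smul_eq hu hv fun g g_smooth g_cpt => ?_
  have ofReal_g_cpt : HasCompactSupport (ofRealCLM ∘ g) := g_cpt.comp_left rfl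
  have ofReal_g_smooth : ContDiff ℝ ∞ (ofRealCLM ∘ g) := by fun_prop
  simpa using h (ofReal_g_cpt.toSchwartzMap ofReal_g_smooth)

theorem integral_fourier_schwartzMap_smul_eq [NormedSpace ℂ F] (G : 𝓢(V, ℂ))
    {h : V → F} (hh : Integrable h) : ∫ x, (𝓕 G) x • h x = ∫ x, G x • 𝓕 h x := by
  simpa using! VectorFourier.integral_fourierIntegral_smul_eq_flip (L := innerₗ V)
    Real.continuous_fourierChar continuous_inner G.integrable hh

variable [InnerProductSpace ℂ F]

theorem fourier_toLp_ae_eq_fourier {h : V → F} (h1 : Integrable h) (h2 : MemLp h 2) :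
    (𝓕 (h2.toLp h) : Lp F 2 (volume : Measure V)) =ᵐ[volume] 𝓕 h := by
  have fourier_continuous : Continuous (𝓕 h) :=
    VectorFourier.fourierIntegral_continuous Real.continuous_fourierChar
      (innerSL ℝ).continuous₂ h1
  refine ae_eq_of_forall_integral_schwartzMap_smul_eq
    ((Lp.memLp _).locallyIntegrable one_le_two) fourier_continuous.locallyIntegrable fun G => ?_
  calc ∫ x, G x • (𝓕 (h2.toLp h) : Lp F 2 (volume : Measure V)) x
      = ∫ x, (𝓕 G) x • h2.toLp h x := by
        simpa using
          (DFunLike.congr_fun (Lp.fourier_toTemperedDistribution_eq (h2.toLp h)) G).symm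
    _ = ∫ x, (𝓕 G) x • h x :=
        integral_congr_ae (h2.coeFn_toLp.mono fun x hx => congrArg ((𝓕 G) x • ·) hx)
    _ = ∫ x, G x • 𝓕 h x := integral_fourier_schwartzMap_smul_eq G h1

theorem integral_inner_fourier_fourier_of_memLp_two {h k : V → F} (h1 : Integrable h)
    (h2 : MemLp h 2) (k1 : Integrable k) (k2 : MemLp k 2) :
    ∫ x, ⟪𝓕 h x, 𝓕 k x⟫_ℂ = ∫ x, ⟪h x, k x⟫_ℂ := by
  calc ∫ x, ⟪𝓕 h x, 𝓕 k x⟫_ℂ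
      = ⟪𝓕 (h2.toLp h), 𝓕 (k2.toLp k)⟫_ℂ := by
        refine integral_congr_ae ?_
        filter_upwards [fourier_toLp_ae_eq_fourier h1 h2, fourier_toLp_ae_eq_fourier k1 k2]
          with x hx kx
        rw [hx, kx]
    _ = ⟪h2.toLp h, k2.toLp k⟫_ℂ := Lp.inner_fourier_eq _ _
    _ = ∫ x, ⟪h x, k x⟫_ℂ := by
        refine integral_congr_ae ?_
        filter_upwards [h2.coeFn_toLp, k2.coeFn_toLp] with x hx kx
        rw [hx, kx]

end Plancherel

section Translates

variable {G A : Type*} [AddGroup G] [MeasurableSpace G] [MeasurableAdd₂ G] [MeasurableNeg G]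
  {μ : Measure G} [SFinite μ] [μ.IsAddRightInvariant] [μ.IsNegInvariant] [NormedRing A]

theorem integral_integral_mul_comp_sub [NormedAlgebra ℝ A] [CompleteSpace A] {u v : G → A}
    (hu : Integrable u μ) (hv : Integrable v μ) :
    ∫ s, ∫ t, u t * v (t - s) ∂μ ∂μ = (∫ t, u t ∂μ) * ∫ t, v t ∂μ := by
  simpa [convolution, integral_neg_eq_self v μ] using
    integral_convolution (ContinuousLinearMap.mul ℝ A) hu hv.comp_neg

theorem ae_memLp_mul_comp_sub {p : ℝ≥0∞} {u v : G → A} (hu : MemLp u p μ) (hv : MemLp v p μ) :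
    ∀ᵐ s ∂μ, MemLp (fun t => u t * v (t - s)) p μ := by
  have hv_sub (s : G) : MemLp (fun t => v (t - s)) p μ :=
    hv.comp_measurePreserving (measurePreserving_sub_right μ s)
  have mul_meas (s : G) : AEStronglyMeasurable (fun t => u t * v (t - s)) μ :=
    hu.1.mul (hv_sub s).1
  rcases eq_or_ne p 0 with rfl | p_zero
  · exact .of_forall fun s => memLp_zero_iff_aestronglyMeasurable.2 (mul_meas s)
  rcases eq_or_ne p ∞ with rfl | p_top
  · exact .of_forall fun s => (hv_sub s).mul hu
  have hu_pow : Integrable (fun t => ‖u t‖ ^ p.toReal) μ := hu.integrable_norm_rpow p_zero p_top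
  have hv_pow : Integrable (fun t => ‖v (-t)‖ ^ p.toReal) μ :=
    (hv.integrable_norm_rpow p_zero p_top).comp_neg
  filter_upwards [hu_pow.ae_convolution_exists (ContinuousLinearMap.mul ℝ ℝ) hv_pow] with s hs
  rw [← integrable_norm_rpow_iff (mul_meas s) p_zero p_top]
  refine Integrable.mono' hs ((mul_meas s).norm.aemeasurable.pow_const _).aestronglyMeasurable
    (.of_forall fun t => ?_)
  simp only [ContinuousLinearMap.mul_apply', neg_sub]
  rw [Real.norm_of_nonneg (by positivity), ← Real.mul_rpow (norm_nonneg _) (norm_nonneg _)]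
  gcongr
  exact norm_mul_le _ _

end Translates

section Dilation

theorem memLp_comp_smul {V F : Type*} [NormedAddCommGroup V] [NormedSpace ℝ V]
    [FiniteDimensional ℝ V] [MeasurableSpace V] [BorelSpace V] {μ : Measure V} [μ.IsAddHaarMeasure]
    [NormedAddCommGroup F] {p : ℝ≥0∞} {u : V → F} (hu : MemLp u p μ) {r : ℝ} (hr : r ≠ 0) :
    MemLp (fun x => u (r • x)) p μ := by
  refine MemLp.comp_of_map (f := (r • ·)) ?_ (by fun_prop)
  rw [Measure.map_addHaar_smul μ hr]
  exact hu.smul_measure ENNReal.ofReal_ne_top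

variable {α : ℝ}

theorem memLp_dil {ψ : ℝ → ℂ} {p : ℝ≥0∞} (hψ : MemLp ψ p) (hα : α ≠ 0) : MemLp (dil ψ α) p := by
  have hψ_div : MemLp (fun t => ψ (t / α)) p := by
    simpa only [smul_eq_mul, inv_mul_eq_div] using memLp_comp_smul hψ (inv_ne_zero hα)
  exact hψ_div.const_mul _

theorem dil_mul_conj_dil (φ ψ : ℝ → ℂ) (hα : 0 ≤ α) (t : ℝ) :
    dil ψ α t * starRingEnd ℂ (dil φ α t)
      = α⁻¹ • (ψ (t / α) * starRingEnd ℂ (φ (t / α))) := by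
  have scale_sq : α ^ (-(1 / 2 : ℝ)) * α ^ (-(1 / 2 : ℝ)) = α⁻¹ := by
    rw [Real.rpow_neg hα, ← Real.sqrt_eq_rpow, ← mul_inv, Real.mul_self_sqrt hα]
  rw [dil, dil, map_mul, conj_ofReal, mul_mul_mul_comm, ← ofReal_mul, scale_sq, real_smul]

theorem integral_dil_mul_conj_dil (φ ψ : ℝ → ℂ) (hα : 0 < α) :
    ∫ t, dil ψ α t * starRingEnd ℂ (dil φ α t) = ∫ t, ψ t * starRingEnd ℂ (φ t) := by
  simp_rw [dil_mul_conj_dil φ ψ hα.le]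
  rw [integral_smul, Measure.integral_comp_div (fun x => ψ x * starRingEnd ℂ (φ x)),
    abs_of_pos hα, inv_smul_smul₀ hα.ne']

end Dilation

section WavePacket

theorem cexp_I_mul_ofReal_mul_conj (x : ℝ) : cexp (I * x) * starRingEnd ℂ (cexp (I * x)) = 1 := by
  rw [mul_conj', norm_exp_I_mul_ofReal, ofReal_one, one_pow]

theorem qpConst_mul_conj {b : ℝ} (hb : 0 ≤ b) :
    qpConst b * starRingEnd ℂ (qpConst b) = (b / (2 * Real.pi) : ℝ) := by
  rw [mul_conj', qpConst, norm_mul, norm_real, ← ofReal_neg, norm_exp_ofReal_mul_I, mul_one,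
    Real.norm_eq_abs, ← ofReal_pow, sq_abs, Real.sq_sqrt (by positivity)]

/-- The function `t ↦ e^{i(2at² + 2dt)} f(t) conj(ψ_α(t - β))`: the signal seen through the
translated and dilated wavelet, modulated by the part of the phase of the wave packet transform
that depends on `t` alone. The transform is its Fourier transform, up to a phase, a constant and
a rescaling of the frequency. -/
noncomputable def chirpedWindow (a d : ℝ) (ψ f : ℝ → ℂ) (β α t : ℝ) : ℂ :=
  cexp (I * (2 * a * t ^ 2 + 2 * d * t : ℝ)) * (f t * starRingEnd ℂ (dil ψ α (t - β)))

variable (a b c d e : ℝ) (φ ψ f g : ℝ → ℂ) (ξ β α : ℝ)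

theorem qpwpt_eq_fourier_chirpedWindow :
    QPWPT a b c d e ψ f ξ β α = qpConst b *
      (cexp (I * (c * ξ ^ 2 + e * ξ - a * β ^ 2 - d * β : ℝ)) *
        𝓕 (chirpedWindow a d ψ f β α) (-(b / (2 * Real.pi)) * ξ)) := by
  rw [QPWPT, Real.fourier_real_eq_integral_exp_smul]
  congr 1
  rw [← integral_const_mul]
  refine integral_congr_ae (.of_forall fun t => ?_)
  simp only [chirpedWindow, smul_eq_mul, ← mul_assoc, ← Complex.exp_add]
  congr 3
  have pi_ne_zero : (Real.pi : ℂ) ≠ 0 := ofReal_ne_zero.2 Real.pi_ne_zero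
  push_cast
  field_simp
  ring

theorem qpwpt_mul_conj_qpwpt {b : ℝ} (hb : 0 ≤ b) :
    QPWPT a b c d e φ f ξ β α * starRingEnd ℂ (QPWPT a b c d e ψ g ξ β α)
      = (b / (2 * Real.pi)) •
        ⟪𝓕 (chirpedWindow a d ψ g β α) (-(b / (2 * Real.pi)) * ξ),
          𝓕 (chirpedWindow a d φ f β α) (-(b / (2 * Real.pi)) * ξ)⟫_ℂ := by
  simp only [qpwpt_eq_fourier_chirpedWindow, map_mul]
  rw [mul_mul_mul_comm, qpConst_mul_conj hb, mul_mul_mul_comm, cexp_I_mul_ofReal_mul_conj, one_mul,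
    real_smul, RCLike.inner_apply]

theorem inner_chirpedWindow (t : ℝ) :
    ⟪chirpedWindow a d ψ g β α t, chirpedWindow a d φ f β α t⟫_ℂ
      = f t * starRingEnd ℂ (g t) *
        (dil ψ α (t - β) * starRingEnd ℂ (dil φ α (t - β))) := by
  rw [RCLike.inner_apply, chirpedWindow, chirpedWindow, map_mul, mul_mul_mul_comm,
    cexp_I_mul_ofReal_mul_conj, one_mul, map_mul, conj_conj]
  ring

variable {f ψ α}

theorem integrable_chirpedWindow (hf : MemLp f 2) (hψ : MemLp ψ 2) (hα : α ≠ 0) :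
    Integrable (chirpedWindow a d ψ f β α) := by
  have window_memLp : MemLp (fun t => dil ψ α (t - β)) 2 :=
    (memLp_dil hψ hα).comp_measurePreserving (measurePreserving_sub_right volume β)
  exact (hf.integrable_mul window_memLp.star).bdd_mul (c := 1) (by fun_prop)
    (.of_forall fun t => (norm_exp_I_mul_ofReal _).le)

theorem ae_memLp_chirpedWindow {p : ℝ≥0∞} (hf : MemLp f p) (hψ : MemLp ψ p) (hα : α ≠ 0) :
    ∀ᵐ β, MemLp (chirpedWindow a d ψ f β α) p := by
  filter_upwards [ae_memLp_mul_comp_sub hf (memLp_dil hψ hα).star] with β hβ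
  refine hβ.of_le ?_ (.of_forall fun t => ?_)
  · exact AEStronglyMeasurable.mul (by fun_prop) hβ.1
  · rw [chirpedWindow, norm_mul, norm_exp_I_mul_ofReal, one_mul]
    rfl

variable {φ g b β}

theorem integral_qpwpt_mul_conj_qpwpt (hb : 0 < b)
    (hf1 : Integrable (chirpedWindow a d φ f β α)) (hf2 : MemLp (chirpedWindow a d φ f β α) 2)
    (hg1 : Integrable (chirpedWindow a d ψ g β α)) (hg2 : MemLp (chirpedWindow a d ψ g β α) 2) :
    ∫ ξ, QPWPT a b c d e φ f ξ β α * starRingEnd ℂ (QPWPT a b c d e ψ g ξ β α)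
      = ∫ t, f t * starRingEnd ℂ (g t) *
        (dil ψ α (t - β) * starRingEnd ℂ (dil φ α (t - β))) := by
  have scale_pos : 0 < b / (2 * Real.pi) := by positivity
  calc ∫ ξ, QPWPT a b c d e φ f ξ β α * starRingEnd ℂ (QPWPT a b c d e ψ g ξ β α)
      = (b / (2 * Real.pi)) • ∫ ξ : ℝ,
          ⟪𝓕 (chirpedWindow a d ψ g β α) (-(b / (2 * Real.pi)) * ξ),
            𝓕 (chirpedWindow a d φ f β α) (-(b / (2 * Real.pi)) * ξ)⟫_ℂ := by
        simp_rw [qpwpt_mul_conj_qpwpt a c d e φ ψ f g _ β α hb.le, integral_smul]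
    _ = ∫ η, ⟪𝓕 (chirpedWindow a d ψ g β α) η, 𝓕 (chirpedWindow a d φ f β α) η⟫_ℂ := by
        rw [Measure.integral_comp_mul_left fun η : ℝ =>
            (⟪𝓕 (chirpedWindow a d ψ g β α) η, 𝓕 (chirpedWindow a d φ f β α) η⟫_ℂ : ℂ),
          abs_inv, abs_neg, abs_of_pos scale_pos, smul_inv_smul₀ scale_pos.ne']
    _ = ∫ t, ⟪chirpedWindow a d ψ g β α t, chirpedWindow a d φ f β α t⟫_ℂ :=
        integral_inner_fourier_fourier_of_memLp_two hg1 hg2 hf1 hf2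
    _ = ∫ t, f t * starRingEnd ℂ (g t) *
          (dil ψ α (t - β) * starRingEnd ℂ (dil φ α (t - β))) := by
        simp only [inner_chirpedWindow]

end WavePacket

theorem qpwpt_moyal_same_wavelet_general (a b c d e : ℝ) (hb : 0 < b) (f g φ ψ : ℝ → ℂ)
    (hf : MemLp f 2) (hg : MemLp g 2) (hφ : MemLp φ 2) (hψ : MemLp ψ 2) (α : ℝ) (hα : 0 < α) :
    ∫ β, ∫ ξ, QPWPT a b c d e φ f ξ β α * starRingEnd ℂ (QPWPT a b c d e ψ g ξ β α)
      = (∫ t, ψ t * starRingEnd ℂ (φ t)) * ∫ t, f t * starRingEnd ℂ (g t) := by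
  have hα0 := hα.ne'
  calc ∫ β, ∫ ξ, QPWPT a b c d e φ f ξ β α * starRingEnd ℂ (QPWPT a b c d e ψ g ξ β α)
      = ∫ β, ∫ t, f t * starRingEnd ℂ (g t) *
          (dil ψ α (t - β) * starRingEnd ℂ (dil φ α (t - β))) := by
        refine integral_congr_ae ?_
        filter_upwards [ae_memLp_chirpedWindow a d hf hφ hα0, ae_memLp_chirpedWindow a d hg hψ hα0]
          with β hf2 hg2
        exact integral_qpwpt_mul_conj_qpwpt a c d e hb (integrable_chirpedWindow a d β hf hφ hα0)
          hf2 (integrable_chirpedWindow a d β hg hψ hα0) hg2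
    _ = (∫ t, f t * starRingEnd ℂ (g t)) * ∫ t, dil ψ α t * starRingEnd ℂ (dil φ α t) :=
        integral_integral_mul_comp_sub (hf.integrable_mul hg.star)
          ((memLp_dil hψ hα0).integrable_mul (memLp_dil hφ hα0).star)
    _ = (∫ t, ψ t * starRingEnd ℂ (φ t)) * ∫ t, f t * starRingEnd ℂ (g t) := by
        rw [integral_dil_mul_conj_dil φ ψ hα, mul_comm]

theorem qpwpt_moyal_same_wavelet (a b c d e : ℝ) (hb : 0 < b) (f g ψ : ℝ → ℂ)
    (hf1 : Integrable f volume) (hf2 : MemLp f 2 volume)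
    (hg1 : Integrable g volume) (hg2 : MemLp g 2 volume)
    (hψ1 : Integrable ψ volume) (hψ2 : MemLp ψ 2 volume)
    (α : ℝ) (hα : 0 < α) :
    ∫ β : ℝ, ∫ ξ : ℝ,
        QPWPT a b c d e ψ f ξ β α * (starRingEnd ℂ) (QPWPT a b c d e ψ g ξ β α)
      = ((∫ t : ℝ, ‖ψ t‖ ^ 2 : ℝ) : ℂ) * ∫ t : ℝ, f t * (starRingEnd ℂ) (g t) := by
  rw [qpwpt_moyal_same_wavelet_general a b c d e hb f g ψ ψ hf2 hg2 hψ2 hψ2 α hα,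
    ← integral_complex_ofReal]
  simp only [mul_conj', ofReal_pow]
end
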